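/- Let θ > 0, let W be a nonnegative real random variable with finite mean, and let W* have the law of U^{1/θ}·(W+1) where U is uniform on [0,1] and independent of W. Let D_θ be a random variable whose law is the unique fixed point of this transformation (the generalized Dickman distribution). Then the Wasserstein-1 distance satisfies d_1(W, D_θ) ≤ (1+θ)·d_1(W, W*). -/

import Mathlib

open MeasureTheory ProbabilityTheory

/-- The Wasserstein-1 distance between two laws on `ℝ`, defined as the supremum over
1-Lipschitz test functions of the difference of their expectations. -/
noncomputable def d1 (μ ν : Measure ℝ) : ℝ :=
  ⨆ h : {h : ℝ → ℝ // LipschitzWith 1 h}, |∫ x, h.1 x ∂μ - ∫ x, h.1 x ∂ν|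

/-!
The transform `T μ = law of U ^ (1 / θ) * (X + 1)`, with `X ∼ μ` independent of `U`, is the image of
`μ` under a random affine map of slope `U ^ (1 / θ)`. Conditioning on `U` shows that `T` contracts
`d1` by the mean slope `E[U ^ (1 / θ)] = θ / (1 + θ)`, so for the fixed point `ν = T ν` the triangle
inequality through `T μ` gives `d1 μ ν ≤ d1 μ (T μ) + θ / (1 + θ) * d1 μ ν`, and it remains to solve
for `d1 μ ν`.
-/

theorem integrable_comp_of_lipschitzWith {α E F : Type*} [MeasurableSpace α] {P : Measure α}
    [IsFiniteMeasure P] [NormedAddCommGroup E] [NormedAddCommGroup F] {K : NNReal} {h : E → F}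
    {X : α → E} (hh : LipschitzWith K h) (hX : Integrable X P) :
    Integrable (fun a => h (X a)) P := by
  refine ((hX.norm.const_mul (K : ℝ)).add (integrable_const ‖h 0‖)).mono'
    (hh.continuous.comp_aestronglyMeasurable hX.aestronglyMeasurable) (ae_of_all _ fun a => ?_)
  calc ‖h (X a)‖ ≤ ‖h (X a) - h 0‖ + ‖h 0‖ := norm_le_norm_sub_add _ _
    _ ≤ K * ‖X a‖ + ‖h 0‖ := by simpa using hh.norm_sub_le (X a) 0

section Wasserstein

variable {μ ν κ : Measure ℝ}

theorem d1_le {C : ℝ} (hC : ∀ h : ℝ → ℝ, LipschitzWith 1 h → |∫ x, h x ∂μ - ∫ x, h x ∂ν| ≤ C) :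
    d1 μ ν ≤ C := by
  have : Nonempty {h : ℝ → ℝ // LipschitzWith 1 h} := ⟨⟨id, LipschitzWith.id⟩⟩
  exact ciSup_le fun h => hC h.1 h.2

variable [IsProbabilityMeasure μ] [IsProbabilityMeasure ν] [IsProbabilityMeasure κ]

theorem abs_integral_sub_integral_le_integral_prod (hμ : Integrable id μ) (hν : Integrable id ν)
    {h : ℝ → ℝ} (hh : LipschitzWith 1 h) :
    |∫ x, h x ∂μ - ∫ x, h x ∂ν| ≤ ∫ z, |z.1 - z.2| ∂μ.prod ν := by
  have hμh : Integrable (fun z : ℝ × ℝ => h z.1) (μ.prod ν) :=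
    (integrable_comp_of_lipschitzWith hh hμ).comp_fst ν
  have hνh : Integrable (fun z : ℝ × ℝ => h z.2) (μ.prod ν) :=
    (integrable_comp_of_lipschitzWith hh hν).comp_snd μ
  have hcoupling : ∫ x, h x ∂μ - ∫ x, h x ∂ν = ∫ z, (h z.1 - h z.2) ∂μ.prod ν := by
    rw [integral_sub hμh hνh, integral_fun_fst, integral_fun_snd, probReal_univ, probReal_univ,
      one_smul, one_smul]
  rw [hcoupling, ← Real.norm_eq_abs]
  exact norm_integral_le_of_norm_le ((hμ.comp_fst ν).sub (hν.comp_snd μ)).abs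
    (ae_of_all _ fun z => by simpa using hh.norm_sub_le z.1 z.2)

theorem abs_integral_sub_integral_le_d1 (hμ : Integrable id μ) (hν : Integrable id ν)
    {h : ℝ → ℝ} (hh : LipschitzWith 1 h) : |∫ x, h x ∂μ - ∫ x, h x ∂ν| ≤ d1 μ ν := by
  have hbdd : BddAbove (Set.range fun h : {h : ℝ → ℝ // LipschitzWith 1 h} =>
      |∫ x, h.1 x ∂μ - ∫ x, h.1 x ∂ν|) :=
    ⟨_, Set.forall_mem_range.2 fun h => abs_integral_sub_integral_le_integral_prod hμ hν h.2⟩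
  exact le_ciSup hbdd ⟨h, hh⟩

theorem abs_integral_sub_integral_le_mul_d1 (hμ : Integrable id μ) (hν : Integrable id ν)
    {K : NNReal} {g : ℝ → ℝ} (hg : LipschitzWith K g) :
    |∫ x, g x ∂μ - ∫ x, g x ∂ν| ≤ K * d1 μ ν := by
  rcases eq_or_ne K 0 with rfl | hK
  · have hconst (x : ℝ) : g x = g 0 := by simpa using hg.dist_le_mul x 0
    simp [hconst]
  · have hK' : (0 : ℝ) < K := by exact_mod_cast pos_iff_ne_zero.2 hK
    have hlip : LipschitzWith 1 fun x => (K : ℝ)⁻¹ * g x := by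
      refine LipschitzWith.of_dist_le_mul fun x y => ?_
      rw [Real.dist_eq, ← mul_sub, abs_mul, abs_of_pos (inv_pos.2 hK'), inv_mul_le_iff₀ hK']
      simpa [Real.dist_eq] using hg.dist_le_mul x y
    have hle := abs_integral_sub_integral_le_d1 hμ hν hlip
    rwa [integral_const_mul, integral_const_mul, ← mul_sub, abs_mul, abs_of_pos (inv_pos.2 hK'),
      inv_mul_le_iff₀ hK'] at hle

theorem d1_triangle (hμ : Integrable id μ) (hν : Integrable id ν) (hκ : Integrable id κ) :
    d1 μ κ ≤ d1 μ ν + d1 ν κ :=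
  d1_le fun _ hh => (abs_sub_le _ _ _).trans (add_le_add
    (abs_integral_sub_integral_le_d1 hμ hν hh) (abs_integral_sub_integral_le_d1 hν hκ hh))

end Wasserstein

section RandomImage

variable {α : Type*} [MeasurableSpace α] {ρ : Measure α} {F : α → ℝ → ℝ} {L : α → NNReal}
  {μ ν : Measure ℝ}

/-- The law of `F ξ X` for independent `ξ ∼ ρ` and `X ∼ μ`: the image of `μ` under the random map
`F ξ`. -/
noncomputable def randomImage (ρ : Measure α) (F : α → ℝ → ℝ) (μ : Measure ℝ) : Measure ℝ :=
  (ρ.prod μ).map (Function.uncurry F)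

theorem map_eq_randomImage_of_indepFun {Ω : Type*} [MeasurableSpace Ω] {P : Measure Ω}
    [IsFiniteMeasure P] {ξ : Ω → α} {X : Ω → ℝ} (hF : Measurable (Function.uncurry F))
    (hξ : AEMeasurable ξ P) (hX : AEMeasurable X P) (hind : IndepFun ξ X P) :
    P.map (fun ω => F (ξ ω) (X ω)) = randomImage (P.map ξ) F (P.map X) := by
  rw [randomImage, ← (indepFun_iff_map_prod_eq_prod_map_map hξ hX).1 hind,
    AEMeasurable.map_map_of_aemeasurable hF.aemeasurable (hξ.prodMk hX)]
  rfl

theorem isProbabilityMeasure_randomImage [IsProbabilityMeasure ρ] [IsProbabilityMeasure μ]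
    (hF : Measurable (Function.uncurry F)) : IsProbabilityMeasure (randomImage ρ F μ) :=
  Measure.isProbabilityMeasure_map hF.aemeasurable

theorem integrable_id_randomImage [IsFiniteMeasure μ] (hF : Measurable (Function.uncurry F))
    (hLip : ∀ u, LipschitzWith (L u) (F u)) (hL : Integrable (fun u => (L u : ℝ)) ρ)
    (hF₀ : Integrable (fun u => F u 0) ρ) (hμ : Integrable id μ) :
    Integrable id (randomImage ρ F μ) := by
  refine (integrable_map_measure aestronglyMeasurable_id hF.aemeasurable).2 ?_
  refine ((hL.mul_prod hμ.norm).add (hF₀.norm.comp_fst μ)).mono' hF.aestronglyMeasurable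
    (ae_of_all _ fun z => ?_)
  calc ‖F z.1 z.2‖ ≤ ‖F z.1 z.2 - F z.1 0‖ + ‖F z.1 0‖ := norm_le_norm_sub_add _ _
    _ ≤ L z.1 * ‖z.2‖ + ‖F z.1 0‖ := by simpa using (hLip z.1).norm_sub_le z.2 0

theorem integral_randomImage [SFinite ρ] [SFinite μ] {h : ℝ → ℝ}
    (hF : Measurable (Function.uncurry F)) (hint : Integrable h (randomImage ρ F μ)) :
    ∫ y, h y ∂randomImage ρ F μ = ∫ u, ∫ x, h (F u x) ∂μ ∂ρ :=
  (integral_map hF.aemeasurable hint.aestronglyMeasurable).trans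
    (integral_prod _ (hint.comp_measurable hF))

theorem d1_randomImage_le [IsFiniteMeasure ρ] [IsProbabilityMeasure μ] [IsProbabilityMeasure ν]
    (hF : Measurable (Function.uncurry F)) (hLip : ∀ u, LipschitzWith (L u) (F u))
    (hL : Integrable (fun u => (L u : ℝ)) ρ) (hF₀ : Integrable (fun u => F u 0) ρ)
    (hμ : Integrable id μ) (hν : Integrable id ν) :
    d1 (randomImage ρ F μ) (randomImage ρ F ν) ≤ (∫ u, (L u : ℝ) ∂ρ) * d1 μ ν := by
  refine d1_le fun h hh => ?_
  have hint {κ : Measure ℝ} [IsProbabilityMeasure κ] (hκ : Integrable id κ) :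
      Integrable h (randomImage ρ F κ) :=
    have : IsFiniteMeasure (randomImage ρ F κ) := Measure.isFiniteMeasure_map _ _
    integrable_comp_of_lipschitzWith hh (integrable_id_randomImage hF hLip hL hF₀ hκ)
  have hsection_int {κ : Measure ℝ} [IsProbabilityMeasure κ] (hκ : Integrable id κ) :
      Integrable (fun u => ∫ x, h (F u x) ∂κ) ρ :=
    ((hint hκ).comp_measurable hF).integral_prod_left
  have hsection_le (u : α) : |∫ x, h (F u x) ∂μ - ∫ x, h (F u x) ∂ν| ≤ L u * d1 μ ν :=
    abs_integral_sub_integral_le_mul_d1 hμ hν (one_mul (L u) ▸ hh.comp (hLip u))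
  rw [integral_randomImage hF (hint hμ), integral_randomImage hF (hint hν),
    ← integral_sub (hsection_int hμ) (hsection_int hν), ← integral_mul_const, ← Real.norm_eq_abs]
  exact norm_integral_le_of_norm_le (hL.mul_const _) (ae_of_all _ hsection_le)

theorem one_sub_mul_d1_le_of_randomImage_eq_self [IsProbabilityMeasure ρ] [IsProbabilityMeasure μ]
    [IsProbabilityMeasure ν] (hF : Measurable (Function.uncurry F))
    (hLip : ∀ u, LipschitzWith (L u) (F u)) (hL : Integrable (fun u => (L u : ℝ)) ρ)
    (hF₀ : Integrable (fun u => F u 0) ρ) (hμ : Integrable id μ) (hν : Integrable id ν)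
    (hfix : randomImage ρ F ν = ν) :
    (1 - ∫ u, (L u : ℝ) ∂ρ) * d1 μ ν ≤ d1 μ (randomImage ρ F μ) := by
  have := isProbabilityMeasure_randomImage (ρ := ρ) (μ := μ) hF
  have htriangle := d1_triangle hμ (integrable_id_randomImage hF hLip hL hF₀ hμ) hν
  have hcontract := d1_randomImage_le hF hLip hL hF₀ hμ hν
  rw [hfix] at hcontract
  linarith

end RandomImage

section Dickman

/-- The transform whose fixed point is the generalized Dickman law of parameter `θ`: it sends the
law of `X` to that of `U ^ (1 / θ) * (X + 1)`, where `U` is uniform on `[0, 1]` and independent of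
`X`. -/
noncomputable def dickmanTransform (θ : ℝ) (μ : Measure ℝ) : Measure ℝ :=
  randomImage (volume.restrict (Set.Icc (0 : ℝ) 1)) (fun u x => u ^ (1 / θ) * (x + 1)) μ

theorem measurable_uncurry_rpow_mul_add_one (p : ℝ) :
    Measurable (Function.uncurry fun u x : ℝ => u ^ p * (x + 1)) :=
  (measurable_fst.pow_const p).mul (measurable_snd.add_const 1)

theorem map_rpow_mul_add_one_eq_dickmanTransform {Ω : Type*} [MeasurableSpace Ω] {P : Measure Ω}
    [IsFiniteMeasure P] {U X : Ω → ℝ} (θ : ℝ) (hU : AEMeasurable U P)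
    (hUunif : P.map U = volume.restrict (Set.Icc (0 : ℝ) 1)) (hX : AEMeasurable X P)
    (hind : IndepFun U X P) :
    P.map (fun ω => U ω ^ (1 / θ) * (X ω + 1)) = dickmanTransform θ (P.map X) := by
  rw [dickmanTransform, ← hUunif]
  exact map_eq_randomImage_of_indepFun (measurable_uncurry_rpow_mul_add_one (1 / θ)) hU hX hind

theorem lipschitzWith_mul_add (a b : ℝ) : LipschitzWith ‖a‖₊ fun x : ℝ => a * (x + b) :=
  LipschitzWith.of_dist_le_mul fun x y => by simp [Real.dist_eq, ← mul_sub, abs_mul]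

theorem setIntegral_Icc_norm_rpow {p : ℝ} (hp : -1 < p) :
    ∫ u in Set.Icc (0 : ℝ) 1, ‖u ^ p‖ = (p + 1)⁻¹ := by
  have hnorm : Set.EqOn (fun u : ℝ => ‖u ^ p‖) (fun u => u ^ p) (Set.Icc 0 1) :=
    fun u hu => Real.norm_of_nonneg (Real.rpow_nonneg hu.1 p)
  rw [setIntegral_congr_fun measurableSet_Icc hnorm, integral_Icc_eq_integral_Ioc,
    ← intervalIntegral.integral_of_le zero_le_one, integral_rpow (Or.inl hp), Real.one_rpow,
    Real.zero_rpow (by linarith), sub_zero, one_div]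

theorem stmt_14_general {θ : ℝ} (hθ : 0 < θ) {μ ν : Measure ℝ} [IsProbabilityMeasure μ]
    [IsProbabilityMeasure ν] (hμ : Integrable id μ) (hν : Integrable id ν)
    (hfix : dickmanTransform θ ν = ν) :
    d1 μ ν ≤ (1 + θ) * d1 μ (dickmanTransform θ μ) := by
  have : IsProbabilityMeasure (volume.restrict (Set.Icc (0 : ℝ) 1)) := ⟨by simp⟩
  have hp : 0 < 1 / θ := by positivity
  have hpow : Continuous fun u : ℝ => u ^ (1 / θ) := Real.continuous_rpow_const hp.le
  have hcollage := one_sub_mul_d1_le_of_randomImage_eq_self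
    (measurable_uncurry_rpow_mul_add_one (1 / θ)) (fun u => lipschitzWith_mul_add (u ^ (1 / θ)) 1)
    hpow.norm.integrableOn_Icc (hpow.mul continuous_const).integrableOn_Icc hμ hν hfix
  have hslope : 1 - ∫ u in Set.Icc (0 : ℝ) 1, ‖u ^ (1 / θ)‖ = (1 + θ)⁻¹ := by
    rw [setIntegral_Icc_norm_rpow (by linarith)]
    field_simp
    ring
  simp only [coe_nnnorm] at hcollage
  rwa [hslope, inv_mul_le_iff₀ (by positivity)] at hcollage

end Dickman

theorem stmt_14 {Ω : Type*} [MeasureSpace Ω] [IsProbabilityMeasure (ℙ : Measure Ω)]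
    (θ : ℝ) (hθ : 0 < θ)
    (W : Ω → ℝ) (hWmeas : Measurable W) (hWpos : ∀ ω, 0 ≤ W ω) (hWint : Integrable W)
    (U : Ω → ℝ) (hUmeas : Measurable U)
    (hUunif : Measure.map U ℙ = volume.restrict (Set.Icc (0:ℝ) 1))
    (hindep : IndepFun U W)
    {Ω' : Type*} [MeasureSpace Ω'] [IsProbabilityMeasure (ℙ : Measure Ω')]
    (D : Ω' → ℝ) (hDmeas : Measurable D) (hDpos : ∀ ω, 0 ≤ D ω) (hDint : Integrable D)
    (V : Ω' → ℝ) (hVmeas : Measurable V)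
    (hVunif : Measure.map V ℙ = volume.restrict (Set.Icc (0:ℝ) 1))
    (hindep' : IndepFun V D)
    -- `D` has the generalized Dickman distribution: it is a fixed point of the transform
    (hfix : Measure.map (fun ω => V ω ^ (1 / θ) * (D ω + 1)) ℙ = Measure.map D ℙ) :
    d1 (Measure.map W ℙ) (Measure.map D ℙ)
      ≤ (1 + θ) * d1 (Measure.map W ℙ)
          (Measure.map (fun ω => U ω ^ (1 / θ) * (W ω + 1)) ℙ) := by
  have := Measure.isProbabilityMeasure_map (μ := ℙ) hWmeas.aemeasurable
  have := Measure.isProbabilityMeasure_map (μ := ℙ) hDmeas.aemeasurable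
  have hWid : Integrable id (Measure.map W ℙ) :=
    (integrable_map_measure aestronglyMeasurable_id hWmeas.aemeasurable).2 hWint
  have hDid : Integrable id (Measure.map D ℙ) :=
    (integrable_map_measure aestronglyMeasurable_id hDmeas.aemeasurable).2 hDint
  rw [map_rpow_mul_add_one_eq_dickmanTransform θ hVmeas.aemeasurable hVunif hDmeas.aemeasurable
    hindep'] at hfix
  rw [map_rpow_mul_add_one_eq_dickmanTransform θ hUmeas.aemeasurable hUunif hWmeas.aemeasurable
    hindep]
  exact stmt_14_general hθ hWid hDid hfix
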